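/- Let S be a topological semigroup with identity and suppose there is a family {S_α}_{α∈I} of subsemigroups of S, each containing the identity of S, such that: (i) the union ⋃_{α∈I} S_α is dense in S; (ii) each S_α (with the subspace topology) is an amenable topological semigroup; (iii) for any α₁, α₂ ∈ I there exists α₃ ∈ I with S_{α₁} ∪ S_{α₂} ⊆ S_{α₃}. Then S is amenable. -/

import Mathlib

open BoundedContinuousFunction MeasureTheory Filter Topology

noncomputable section

namespace Paper

variable {S : Type*} [Semigroup S] [TopologicalSpace S] [ContinuousMul S]

/-- Left translate: `(f·s)(t) = f (s * t)`. -/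
def lTrans (f : S →ᵇ ℝ) (s : S) : S →ᵇ ℝ :=
  f.compContinuous ⟨fun t => s * t, continuous_mul_left s⟩

/-- Right translate: `(s·f)(t) = f (t * s)`. -/
def rTrans (f : S →ᵇ ℝ) (s : S) : S →ᵇ ℝ :=
  f.compContinuous ⟨fun t => t * s, continuous_mul_right s⟩

@[simp] lemma lTrans_apply (f : S →ᵇ ℝ) (s t : S) : lTrans f s t = f (s * t) := rfl
@[simp] lemma rTrans_apply (f : S →ᵇ ℝ) (s t : S) : rTrans f s t = f (t * s) := rfl

variable (S) in
/-- The space of left uniformly continuous bounded functions on `S`. -/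
def LUC : Submodule ℝ (S →ᵇ ℝ) where
  carrier := {f | Continuous fun s => lTrans f s}
  add_mem' {f g} hf hg := by
    show Continuous fun s => lTrans (f + g) s
    have h : (fun s => lTrans (f + g) s) = fun s => lTrans f s + lTrans g s := by
      funext s; ext t; simp
    rw [h]; exact Continuous.add hf hg
  zero_mem' := by
    show Continuous fun s : S => lTrans (0 : S →ᵇ ℝ) s
    have h : (fun s : S => lTrans (0 : S →ᵇ ℝ) s) = fun _ => (0 : S →ᵇ ℝ) := by
      funext s; ext t; simp
    rw [h]; exact continuous_const
  smul_mem' r f hf := by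
    show Continuous fun s => lTrans (r • f) s
    have h : (fun s => lTrans (r • f) s) = fun s => r • lTrans f s := by
      funext s; ext t; simp
    rw [h]; exact Continuous.const_smul hf r

variable (S) in
/-- The space of right uniformly continuous bounded functions on `S`. -/
def RUC : Submodule ℝ (S →ᵇ ℝ) where
  carrier := {f | Continuous fun s => rTrans f s}
  add_mem' {f g} hf hg := by
    show Continuous fun s => rTrans (f + g) s
    have h : (fun s => rTrans (f + g) s) = fun s => rTrans f s + rTrans g s := by
      funext s; ext t; simp
    rw [h]; exact Continuous.add hf hg
  zero_mem' := by
    show Continuous fun s : S => rTrans (0 : S →ᵇ ℝ) s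
    have h : (fun s : S => rTrans (0 : S →ᵇ ℝ) s) = fun _ => (0 : S →ᵇ ℝ) := by
      funext s; ext t; simp
    rw [h]; exact continuous_const
  smul_mem' r f hf := by
    show Continuous fun s => rTrans (r • f) s
    have h : (fun s => rTrans (r • f) s) = fun s => r • rTrans f s := by
      funext s; ext t; simp
    rw [h]; exact Continuous.const_smul hf r

lemma mem_LUC_iff {f : S →ᵇ ℝ} : f ∈ LUC S ↔ Continuous fun s => lTrans f s := Iff.rfl

lemma mem_RUC_iff {f : S →ᵇ ℝ} : f ∈ RUC S ↔ Continuous fun s => rTrans f s := Iff.rfl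

lemma one_mem_LUC : (1 : S →ᵇ ℝ) ∈ LUC S := by
  rw [mem_LUC_iff]
  have h : (fun s : S => lTrans (1 : S →ᵇ ℝ) s) = fun _ => (1 : S →ᵇ ℝ) := by
    funext s; ext t; simp
  rw [h]; exact continuous_const

lemma one_mem_RUC : (1 : S →ᵇ ℝ) ∈ RUC S := by
  rw [mem_RUC_iff]
  have h : (fun s : S => rTrans (1 : S →ᵇ ℝ) s) = fun _ => (1 : S →ᵇ ℝ) := by
    funext s; ext t; simp
  rw [h]; exact continuous_const

lemma mul_mem_LUC {f g : S →ᵇ ℝ} (hf : f ∈ LUC S) (hg : g ∈ LUC S) : f * g ∈ LUC S := by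
  rw [mem_LUC_iff] at *
  have h : (fun s => lTrans (f * g) s) = fun s => lTrans f s * lTrans g s := by
    funext s; ext t; simp
  rw [h]; exact Continuous.mul hf hg

lemma mul_mem_RUC {f g : S →ᵇ ℝ} (hf : f ∈ RUC S) (hg : g ∈ RUC S) : f * g ∈ RUC S := by
  rw [mem_RUC_iff] at *
  have h : (fun s => rTrans (f * g) s) = fun s => rTrans f s * rTrans g s := by
    funext s; ext t; simp
  rw [h]; exact Continuous.mul hf hg

lemma lTrans_mem {f : S →ᵇ ℝ} (hf : f ∈ LUC S) (s : S) : lTrans f s ∈ LUC S := by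
  rw [mem_LUC_iff] at *
  have h : (fun t => lTrans (lTrans f s) t) = fun t => lTrans f (s * t) := by
    funext t; ext u; simp [mul_assoc]
  rw [h]; exact hf.comp (continuous_mul_left s)

lemma rTrans_mem {f : S →ᵇ ℝ} (hf : f ∈ RUC S) (s : S) : rTrans f s ∈ RUC S := by
  rw [mem_RUC_iff] at *
  have h : (fun t => rTrans (rTrans f s) t) = fun t => rTrans f (t * s) := by
    funext t; ext u; simp [mul_assoc]
  rw [h]; exact hf.comp (continuous_mul_right s)

variable (S) in
/-- `I` is a left invariant mean on `LUC S`. -/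
def IsLeftInvariantMean (I : LUC S →ₗ[ℝ] ℝ) : Prop :=
  I ⟨1, one_mem_LUC⟩ = 1 ∧
  (∀ f : LUC S, 0 ≤ (f : S →ᵇ ℝ) → 0 ≤ I f) ∧
  ∀ (f : S →ᵇ ℝ) (hf : f ∈ LUC S) (s : S),
    I ⟨lTrans f s, lTrans_mem hf s⟩ = I ⟨f, hf⟩

variable (S) in
/-- `I` is a right invariant mean on `RUC S`. -/
def IsRightInvariantMean (I : RUC S →ₗ[ℝ] ℝ) : Prop :=
  I ⟨1, one_mem_RUC⟩ = 1 ∧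
  (∀ f : RUC S, 0 ≤ (f : S →ᵇ ℝ) → 0 ≤ I f) ∧
  ∀ (f : S →ᵇ ℝ) (hf : f ∈ RUC S) (s : S),
    I ⟨rTrans f s, rTrans_mem hf s⟩ = I ⟨f, hf⟩

variable (S) in
def LeftAmenable : Prop := ∃ I : LUC S →ₗ[ℝ] ℝ, IsLeftInvariantMean S I

variable (S) in
def RightAmenable : Prop := ∃ I : RUC S →ₗ[ℝ] ℝ, IsRightInvariantMean S I

variable (S) in
/-- A topological semigroup is amenable if `LUC` admits a left invariant mean and
`RUC` admits a right invariant mean. -/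
def Amenable : Prop := LeftAmenable S ∧ RightAmenable S

variable (S) in
/-- `I` is a multiplicative left invariant mean on `LUC S`. -/
def IsMultLeftInvariantMean (I : LUC S →ₗ[ℝ] ℝ) : Prop :=
  IsLeftInvariantMean S I ∧
  ∀ (f g : S →ᵇ ℝ) (hf : f ∈ LUC S) (hg : g ∈ LUC S),
    I ⟨f * g, mul_mem_LUC hf hg⟩ = I ⟨f, hf⟩ * I ⟨g, hg⟩

variable (S) in
def IsMultRightInvariantMean (I : RUC S →ₗ[ℝ] ℝ) : Prop :=
  IsRightInvariantMean S I ∧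
  ∀ (f g : S →ᵇ ℝ) (hf : f ∈ RUC S) (hg : g ∈ RUC S),
    I ⟨f * g, mul_mem_RUC hf hg⟩ = I ⟨f, hf⟩ * I ⟨g, hg⟩

variable (S) in
def ExtremelyLeftAmenable : Prop := ∃ I : LUC S →ₗ[ℝ] ℝ, IsMultLeftInvariantMean S I

variable (S) in
def ExtremelyRightAmenable : Prop := ∃ I : RUC S →ₗ[ℝ] ℝ, IsMultRightInvariantMean S I

variable (S) in
def ExtremelyAmenable : Prop := ExtremelyLeftAmenable S ∧ ExtremelyRightAmenable S

/-!
Call a mean `B`-invariant if it is invariant under translation by every element of `B`. Means have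
norm at most one, so by Tychonoff's theorem the `B`-invariant means form a compact set for pointwise
convergence, which shrinks as `B` grows. An invariant mean on a subsemigroup `A α` gives an
`A α`-invariant mean on `S` by restricting functions, so for a directed family these compact sets
are nonempty and directed, and they have a common point: a mean invariant under the whole union.
Translates of a uniformly continuous function depend norm-continuously on the translating element,
hence invariance passes to the closure of the union.
-/

section Means

variable {X Y σ τ : Type*} [TopologicalSpace X] [TopologicalSpace Y]
  {V : Submodule ℝ (X →ᵇ ℝ)} {W : Submodule ℝ (Y →ᵇ ℝ)}
  {hV : (1 : X →ᵇ ℝ) ∈ V} {hW : (1 : Y →ᵇ ℝ) ∈ W}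

/-- A mean on a space `V` of bounded continuous functions that contains the constants: a normalized
positive linear functional. It is not bundled as a continuous map, since boundedness is automatic
(`IsMean.norm_apply_le`). -/
structure IsMean (hV : (1 : X →ᵇ ℝ) ∈ V) (I : V →ₗ[ℝ] ℝ) : Prop where
  map_one : I ⟨1, hV⟩ = 1
  nonneg : ∀ f : V, 0 ≤ (f : X →ᵇ ℝ) → 0 ≤ I f

lemma IsMean.mono {I : V →ₗ[ℝ] ℝ} (hI : IsMean hV I) {f g : V} (hfg : f ≤ g) : I f ≤ I g := by
  have hsub : 0 ≤ I (g - f) := hI.nonneg (g - f) (sub_nonneg.2 (Subtype.coe_le_coe.2 hfg))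
  calc I f ≤ I f + I (g - f) := le_add_of_nonneg_right hsub
    _ = I (f + (g - f)) := (map_add I f (g - f)).symm
    _ = I g := congrArg I (add_sub_cancel f g)

lemma IsMean.norm_apply_le {I : V →ₗ[ℝ] ℝ} (hI : IsMean hV I) (f : V) : ‖I f‖ ≤ ‖f‖ := by
  have map_const (c : ℝ) : I (c • ⟨1, hV⟩) = c := by
    rw [map_smul, hI.map_one, smul_eq_mul, mul_one]
  have lower : (-‖f‖) • (⟨1, hV⟩ : V) ≤ f := fun x => by
    simpa using (f : X →ᵇ ℝ).neg_norm_le_apply x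
  have upper : f ≤ ‖f‖ • (⟨1, hV⟩ : V) := fun x => by
    simpa using (f : X →ᵇ ℝ).apply_le_norm x
  exact abs_le.2 ⟨map_const (-‖f‖) ▸ hI.mono lower, (hI.mono upper).trans_eq (map_const ‖f‖)⟩

lemma IsMean.continuous {I : V →ₗ[ℝ] ℝ} (hI : IsMean hV I) : Continuous I :=
  AddMonoidHomClass.continuous_of_bound I 1 fun f => (hI.norm_apply_le f).trans_eq (one_mul _).symm

/-- The means on `V` that are invariant under the maps `T s` with `s ∈ B`. -/
def invariantMeans (hV : (1 : X →ᵇ ℝ) ∈ V) (T : σ → V → V) (B : Set σ) : Set (V →ₗ[ℝ] ℝ) :=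
  {I | IsMean hV I ∧ ∀ s ∈ B, ∀ f, I (T s f) = I f}

lemma invariantMeans_antitone (T : σ → V → V) : Antitone (invariantMeans hV T) :=
  fun _ _ hBC _ hI => ⟨hI.1, fun s hs => hI.2 s (hBC hs)⟩

-- `V →ₗ[ℝ] ℝ` has no topology instance; its image in `V → ℝ` carries pointwise convergence.
lemma isClosed_coe_image_invariantMeans (T : σ → V → V) (B : Set σ) :
    IsClosed ((⇑) '' invariantMeans hV T B : Set (V → ℝ)) := by
  have eq_inter : ((⇑) '' invariantMeans hV T B : Set (V → ℝ)) =
      Set.range ((⇑) : (V →ₗ[ℝ] ℝ) → V → ℝ) ∩ {k | k ⟨1, hV⟩ = 1} ∩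
        (⋂ (f : V) (_ : 0 ≤ (f : X →ᵇ ℝ)), {k | 0 ≤ k f}) ∩
        ⋂ s ∈ B, ⋂ f, {k | k (T s f) = k f} := by
    ext k
    simp only [Set.mem_inter_iff, Set.mem_iInter]
    constructor
    · rintro ⟨I, ⟨hI, hinv⟩, rfl⟩
      exact ⟨⟨⟨⟨I, rfl⟩, hI.map_one⟩, hI.nonneg⟩, hinv⟩
    · rintro ⟨⟨⟨⟨I, rfl⟩, hone⟩, hnonneg⟩, hinv⟩
      exact ⟨I, ⟨⟨hone, hnonneg⟩, hinv⟩, rfl⟩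
  have eval (f : V) : Continuous fun k : V → ℝ => k f := continuous_apply f
  rw [eq_inter]
  refine (((LinearMap.isClosed_range_coe _ _ _).inter ?_).inter ?_).inter ?_
  · exact isClosed_eq (eval _) continuous_const
  · exact isClosed_biInter fun f _ => isClosed_le continuous_const (eval f)
  · exact isClosed_biInter fun s _ => isClosed_iInter fun f => isClosed_eq (eval _) (eval f)

lemma isCompact_coe_image_invariantMeans (T : σ → V → V) (B : Set σ) :
    IsCompact ((⇑) '' invariantMeans hV T B : Set (V → ℝ)) := by
  refine (isCompact_univ_pi fun f : V => isCompact_Icc (a := -‖f‖) (b := ‖f‖)).of_isClosed_subset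
    (isClosed_coe_image_invariantMeans T B) ?_
  rintro _ ⟨I, hI, rfl⟩ f -
  exact abs_le.1 (hI.1.norm_apply_le f)

lemma invariantMeans_iUnion {ι : Type*} [Nonempty ι] (T : σ → V → V) (A : ι → Set σ) :
    invariantMeans hV T (⋃ α, A α) = ⋂ α, invariantMeans hV T (A α) := by
  refine (Set.subset_iInter fun α => invariantMeans_antitone T (Set.subset_iUnion A α)).antisymm
    fun I hI => ?_
  rw [Set.mem_iInter] at hI
  refine ⟨(hI (Classical.arbitrary ι)).1, fun s hs => ?_⟩
  obtain ⟨α, hα⟩ := Set.mem_iUnion.1 hs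
  exact (hI α).2 s hα

lemma invariantMeans_closure [TopologicalSpace σ] {T : σ → V → V}
    (hT : ∀ f, Continuous fun s => T s f) (B : Set σ) :
    invariantMeans hV T (closure B) = invariantMeans hV T B := by
  refine (invariantMeans_antitone T subset_closure).antisymm fun I hI => ⟨hI.1, fun s hs f => ?_⟩
  have hcont : Continuous fun s => I (T s f) := hI.1.continuous.comp (hT f)
  exact closure_minimal (fun s hs => hI.2 s hs f) (isClosed_eq hcont continuous_const) hs

theorem nonempty_invariantMeans_iUnion_of_directed {ι : Type*} [Nonempty ι] (T : σ → V → V)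
    {A : ι → Set σ} (hdir : Directed (· ⊆ ·) A)
    (hne : ∀ α, (invariantMeans hV T (A α)).Nonempty) :
    (invariantMeans hV T (⋃ α, A α)).Nonempty := by
  rw [invariantMeans_iUnion, ← Set.image_nonempty (f := ((⇑) : (V →ₗ[ℝ] ℝ) → V → ℝ)),
    DFunLike.coe_injective.injOn.image_iInter_eq]
  refine IsCompact.nonempty_iInter_of_directed_nonempty_isCompact_isClosed _ ?_
    (fun α => (hne α).image _) (fun α => isCompact_coe_image_invariantMeans T (A α))
    fun α => isClosed_coe_image_invariantMeans T (A α)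
  exact fun α β => (hdir α β).imp fun _ h =>
    ⟨Set.image_mono (invariantMeans_antitone T h.1), Set.image_mono (invariantMeans_antitone T h.2)⟩

theorem nonempty_invariantMeans_univ_of_directed [TopologicalSpace σ] {ι : Type*} [Nonempty ι]
    {T : σ → V → V} (hT : ∀ f, Continuous fun s => T s f) {A : ι → Set σ}
    (hdir : Directed (· ⊆ ·) A) (hdense : Dense (⋃ α, A α))
    (hne : ∀ α, (invariantMeans hV T (A α)).Nonempty) :
    (invariantMeans hV T Set.univ).Nonempty := by
  rw [← hdense.closure_eq, invariantMeans_closure hT]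
  exact nonempty_invariantMeans_iUnion_of_directed T hdir hne

/-- Composition with `φ` as a linear map between spaces of bounded continuous functions. -/
def pullback (φ : C(Y, X)) (hφ : ∀ f ∈ V, f.compContinuous φ ∈ W) : V →ₗ[ℝ] W :=
  (compContinuousCLM ℝ ℝ φ).toLinearMap.restrict hφ

lemma IsMean.comp_pullback {I : W →ₗ[ℝ] ℝ} (hI : IsMean hW I) (φ : C(Y, X))
    (hφ : ∀ f ∈ V, f.compContinuous φ ∈ W) : IsMean hV (I ∘ₗ pullback φ hφ) where
  map_one := hI.map_one
  nonneg _ hf := hI.nonneg _ fun y => hf (φ y)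

lemma nonempty_invariantMeans_range_of_pullback {T : σ → V → V} {T' : τ → W → W} (φ : C(Y, X))
    (hφ : ∀ f ∈ V, f.compContinuous φ ∈ W) (ψ : τ → σ)
    (hψ : ∀ t f, pullback φ hφ (T (ψ t) f) = T' t (pullback φ hφ f))
    (hne : (invariantMeans hW T' Set.univ).Nonempty) :
    (invariantMeans hV T (Set.range ψ)).Nonempty := by
  obtain ⟨I, hI, hinv⟩ := hne
  refine ⟨I ∘ₗ pullback φ hφ, hI.comp_pullback φ hφ, ?_⟩
  rintro _ ⟨t, rfl⟩ f
  rw [LinearMap.comp_apply, hψ, hinv t (Set.mem_univ t), LinearMap.comp_apply]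

end Means

section Translations

variable {M : Type*} [Semigroup M] [TopologicalSpace M] [ContinuousMul M]

/-- Left translation as a family of self-maps of `LUC S`. -/
def leftTranslation (s : S) (f : LUC S) : LUC S := ⟨lTrans f s, lTrans_mem f.2 s⟩

/-- Right translation as a family of self-maps of `RUC S`. -/
def rightTranslation (s : S) (f : RUC S) : RUC S := ⟨rTrans f s, rTrans_mem f.2 s⟩

lemma continuous_leftTranslation (f : LUC S) : Continuous fun s => leftTranslation s f :=
  (mem_LUC_iff.1 f.2).subtype_mk _

lemma continuous_rightTranslation (f : RUC S) : Continuous fun s => rightTranslation s f :=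
  (mem_RUC_iff.1 f.2).subtype_mk _

lemma leftAmenable_iff_nonempty_invariantMeans :
    LeftAmenable S ↔ (invariantMeans one_mem_LUC (leftTranslation (S := S)) Set.univ).Nonempty :=
  exists_congr fun _ =>
    ⟨fun h => ⟨⟨h.1, h.2.1⟩, fun s _ f => h.2.2 f f.2 s⟩,
      fun h => ⟨h.1.map_one, h.1.nonneg, fun f hf s => h.2 s (Set.mem_univ s) ⟨f, hf⟩⟩⟩

lemma rightAmenable_iff_nonempty_invariantMeans :
    RightAmenable S ↔
      (invariantMeans one_mem_RUC (rightTranslation (S := S)) Set.univ).Nonempty :=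
  exists_congr fun _ =>
    ⟨fun h => ⟨⟨h.1, h.2.1⟩, fun s _ f => h.2.2 f f.2 s⟩,
      fun h => ⟨h.1.map_one, h.1.nonneg, fun f hf s => h.2 s (Set.mem_univ s) ⟨f, hf⟩⟩⟩

lemma lTrans_compContinuous (f : S →ᵇ ℝ) (φ : M →ₙ* S) (hφ : Continuous φ) (m : M) :
    lTrans (f.compContinuous ⟨φ, hφ⟩) m = (lTrans f (φ m)).compContinuous ⟨φ, hφ⟩ := by
  ext t
  exact congrArg f (map_mul φ m t)

lemma rTrans_compContinuous (f : S →ᵇ ℝ) (φ : M →ₙ* S) (hφ : Continuous φ) (m : M) :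
    rTrans (f.compContinuous ⟨φ, hφ⟩) m = (rTrans f (φ m)).compContinuous ⟨φ, hφ⟩ := by
  ext t
  exact congrArg f (map_mul φ t m)

lemma compContinuous_mem_LUC (φ : M →ₙ* S) (hφ : Continuous φ) (f : S →ᵇ ℝ) (hf : f ∈ LUC S) :
    f.compContinuous ⟨φ, hφ⟩ ∈ LUC M := by
  simp only [mem_LUC_iff, lTrans_compContinuous]
  exact (continuous_compContinuous _).comp ((mem_LUC_iff.1 hf).comp hφ)

lemma compContinuous_mem_RUC (φ : M →ₙ* S) (hφ : Continuous φ) (f : S →ᵇ ℝ) (hf : f ∈ RUC S) :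
    f.compContinuous ⟨φ, hφ⟩ ∈ RUC M := by
  simp only [mem_RUC_iff, rTrans_compContinuous]
  exact (continuous_compContinuous _).comp ((mem_RUC_iff.1 hf).comp hφ)

lemma LeftAmenable.nonempty_invariantMeans_range (hM : LeftAmenable M) (φ : M →ₙ* S)
    (hφ : Continuous φ) :
    (invariantMeans one_mem_LUC (leftTranslation (S := S)) (Set.range φ)).Nonempty :=
  nonempty_invariantMeans_range_of_pullback (T' := leftTranslation) ⟨φ, hφ⟩
    (compContinuous_mem_LUC φ hφ) φ
    (fun m f => Subtype.ext (lTrans_compContinuous (f : S →ᵇ ℝ) φ hφ m).symm)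
    (leftAmenable_iff_nonempty_invariantMeans.1 hM)

lemma RightAmenable.nonempty_invariantMeans_range (hM : RightAmenable M) (φ : M →ₙ* S)
    (hφ : Continuous φ) :
    (invariantMeans one_mem_RUC (rightTranslation (S := S)) (Set.range φ)).Nonempty :=
  nonempty_invariantMeans_range_of_pullback (T' := rightTranslation) ⟨φ, hφ⟩
    (compContinuous_mem_RUC φ hφ) φ
    (fun m f => Subtype.ext (rTrans_compContinuous (f : S →ᵇ ℝ) φ hφ m).symm)
    (rightAmenable_iff_nonempty_invariantMeans.1 hM)

end Translations

section DirectedUnion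

variable {ι : Type*} {A : ι → Subsemigroup S}

theorem leftAmenable_of_directed_dense_union [Nonempty ι] (hdir : Directed (· ≤ ·) A)
    (hdense : Dense (⋃ α, (A α : Set S))) (hamen : ∀ α, LeftAmenable (A α)) :
    LeftAmenable S := by
  refine leftAmenable_iff_nonempty_invariantMeans.2 <|
    nonempty_invariantMeans_univ_of_directed continuous_leftTranslation hdir hdense fun α => ?_
  simpa using
    (hamen α).nonempty_invariantMeans_range (MulMemClass.subtype (A α)) continuous_subtype_val

theorem rightAmenable_of_directed_dense_union [Nonempty ι] (hdir : Directed (· ≤ ·) A)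
    (hdense : Dense (⋃ α, (A α : Set S))) (hamen : ∀ α, RightAmenable (A α)) :
    RightAmenable S := by
  refine rightAmenable_iff_nonempty_invariantMeans.2 <|
    nonempty_invariantMeans_univ_of_directed continuous_rightTranslation hdir hdense fun α => ?_
  simpa using
    (hamen α).nonempty_invariantMeans_range (MulMemClass.subtype (A α)) continuous_subtype_val

theorem amenable_of_directed_dense_union_amenable_general [Nonempty S]
    (hdir : Directed (· ≤ ·) A) (hdense : Dense (⋃ α, (A α : Set S)))
    (hamen : ∀ α, Amenable (A α)) : Amenable S := by
  have : Nonempty ι := (Set.nonempty_iUnion.1 hdense.nonempty).nonempty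
  exact ⟨leftAmenable_of_directed_dense_union hdir hdense fun α => (hamen α).1,
    rightAmenable_of_directed_dense_union hdir hdense fun α => (hamen α).2⟩

end DirectedUnion

/-- Proposition 4.7: a topological semigroup with identity covered densely by a directed
family of amenable subsemigroups (each containing the identity) is amenable. -/
theorem amenable_of_directed_dense_union_amenable
    {S : Type*} [Monoid S] [TopologicalSpace S] [ContinuousMul S]
    {ι : Type*} (A : ι → Subsemigroup S)
    (hone : ∀ α, (1 : S) ∈ A α)
    (hdense : Dense (⋃ α, (A α : Set S)))
    (hamen : ∀ α, Amenable ↥(A α))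
    (hdir : ∀ α₁ α₂, ∃ α₃, (A α₁ : Set S) ∪ (A α₂ : Set S) ⊆ (A α₃ : Set S)) :
    Amenable S :=
  amenable_of_directed_dense_union_amenable_general
    (fun α₁ α₂ => (hdir α₁ α₂).imp fun _ => Set.union_subset_iff.1) hdense hamen

end Paper
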